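/- Let $X$ be a finite type, let $\psi : X \to \mathrm{Bool}$ assign each point to one of two demographic groups, and let $t \ge 0$ be a real number. For a finite set $S \subseteq X$ with both groups nonempty in $S$, define $balance(S) = \min\bigl(|\{x \in S : \psi(x) = \mathrm{true}\}| / |\{x \in S : \psi(x) = \mathrm{false}\}|,\; |\{x \in S : \psi(x) = \mathrm{false}\}| / |\{x \in S : \psi(x) = \mathrm{true}\}|\bigr)$ (real-valued division of cardinalities). If $F_1, \dots, F_l$ ($l \ge 1$) are pairwise disjoint finite subsets of $X$, each containing at least one point of each group and each satisfying $balance(F_j) \ge t$, then $balance(F_1 \cup \cdots \cup F_l) \ge t$. -/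

import Mathlib

/-- The balance of a finite set `S` w.r.t. a binary group assignment `ψ`:
the minimum of the two ratios of group cardinalities (Eq. 3 of the paper). -/
noncomputable def balance {X : Type*} [DecidableEq X] (ψ : X → Bool) (S : Finset X) : ℝ :=
  min ((((S.filter fun x => ψ x = true).card : ℝ)) / (((S.filter fun x => ψ x = false).card : ℝ)))
      ((((S.filter fun x => ψ x = false).card : ℝ)) / (((S.filter fun x => ψ x = true).card : ℝ)))

/-!
For a set meeting both groups, "balance at least `t`" clears denominators to the two inequalities
`t * |S₀| ≤ |S₁|` and `t * |S₁| ≤ |S₀|`. These are linear in the group sizes, and group sizes are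
additive over disjoint unions, so the inequalities for the fairlets sum to those for the cluster.
-/

open Finset

theorem card_filter_biUnion {ι X : Type*} [DecidableEq X] {s : Finset ι} {F : ι → Finset X}
    (hdisj : (s : Set ι).PairwiseDisjoint F) (p : X → Prop) [DecidablePred p] :
    #{x ∈ s.biUnion F | p x} = ∑ i ∈ s, #{x ∈ F i | p x} := by
  rw [filter_biUnion, card_biUnion]
  exact fun i hi j hj hij ↦ disjoint_filter_filter (hdisj hi hj hij)

section Balance

variable {X : Type*} [DecidableEq X] {ψ : X → Bool} {t : ℝ}

theorem le_balance_iff {S : Finset X} (hboth : ∀ b, ∃ x ∈ S, ψ x = b) :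
    t ≤ balance ψ S ↔ ∀ b, t * #{x ∈ S | ψ x = !b} ≤ #{x ∈ S | ψ x = b} := by
  have card_group_pos (b : Bool) : (0 : ℝ) < #{x ∈ S | ψ x = b} :=
    Nat.cast_pos.2 (card_pos.2 (filter_nonempty_iff.2 (hboth b)))
  rw [balance, le_min_iff, le_div_iff₀ (card_group_pos false), le_div_iff₀ (card_group_pos true),
    Bool.forall_bool' true, Bool.not_true, Bool.not_false]

theorem balance_biUnion_fairlets_ge_general {ι : Type*} {s : Finset ι} (hs : s.Nonempty)
    {F : ι → Finset X} (hdisj : (s : Set ι).PairwiseDisjoint F)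
    (hboth : ∀ i ∈ s, ∀ b, ∃ x ∈ F i, ψ x = b) (hbal : ∀ i ∈ s, t ≤ balance ψ (F i)) :
    t ≤ balance ψ (s.biUnion F) := by
  have hboth_union (b : Bool) : ∃ x ∈ s.biUnion F, ψ x = b := by
    obtain ⟨i, hi⟩ := hs
    obtain ⟨x, hx, hxb⟩ := hboth i hi b
    exact ⟨x, mem_biUnion.2 ⟨i, hi, hx⟩, hxb⟩
  refine (le_balance_iff hboth_union).2 fun b ↦ ?_
  rw [card_filter_biUnion hdisj, card_filter_biUnion hdisj, Nat.cast_sum, Nat.cast_sum, mul_sum]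
  exact sum_le_sum fun i hi ↦ (le_balance_iff (hboth i hi)).1 (hbal i hi) b

end Balance

theorem balance_biUnion_fairlets_ge {X : Type*} [Fintype X] [DecidableEq X]
    (ψ : X → Bool) (t : ℝ) (ht : 0 ≤ t)
    (l : ℕ) (hl : 1 ≤ l) (F : Fin l → Finset X)
    (hdisj : ∀ i j, i ≠ j → Disjoint (F i) (F j))
    (hboth : ∀ j, (∃ x ∈ F j, ψ x = true) ∧ (∃ x ∈ F j, ψ x = false))
    (hbal : ∀ j, balance ψ (F j) ≥ t) :
    balance ψ (Finset.univ.biUnion F) ≥ t :=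
  balance_biUnion_fairlets_ge_general ⟨⟨0, hl⟩, mem_univ _⟩ (fun i _ j _ ↦ hdisj i j)
    (fun j _ ↦ (Bool.forall_bool' true).2 (hboth j)) fun j _ ↦ hbal j
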